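/- (Restricted model, path.) In the model where the target does not move after the last test (i.e. success requires $|\mathcal{T}_n \cap \mathcal{D}_{n-1}| \le s$ or $|\mathcal{D}_{n-1} \setminus \mathcal{T}_n| \le s$ before the final $k$-neighborhood expansion is applied), for every $k \ge 1$, $s \ge 4k$ and $n \ge 0$, the maximum $N$ such that a successful adaptive strategy with $n$ tests on the path $P_N$ exists is $N^*_p(n,s) = (s-2k)2^n + k(2n+2).$ -/

import Mathlib

/-!
Write `m = k * n` for a position with `n + 1` tests left, and call `Ioc m (N - m)` the *window*:
the vertices that are more than `m` steps away from the outside of the path. As one test is used up, the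
window grows by `k` on either side, so the `k`-neighborhood of a set inside the old window lies
inside the new one and never feels the ends of the path. Hence, measured inside windows, the path
behaves like the line `ℤ`, where a nonempty set gains at least `2k` points (`card_gammaP_window`).

Let `h n = (s - 2k) 2 ^ n + 2k` (`halfCap`), so that `h (n + 1) + 2k = 2 (h n)`:
a set of `2 (h (n + 1))` points splits into two halves of size `h (n + 1)`, each of which grows to
`2 (h n)` points when it gains exactly `2k`.

* Upper bound (`card_window_le`): if `n + 1` tests suffice from `D`, then `D` has at most `2 (h n)`
  points in the window, because each of the two halves has at most `h n` points there.
* Strategy (`rSuccessful_Ioc`): conversely, from an interval with at most `2 (h n)` points in the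
  window, `n + 1` tests suffice, by cutting it into two intervals at `h n` points of the window.

For the whole path the window has `N - 2 k n` points, so that `n + 1` tests suffice exactly when
`N ≤ 2 (h n) + 2 k n`.
-/

open Finset

/-- One-step neighborhood on the cycle `C_N` (vertices `1..N`, loop at every vertex). -/
def cycStep (N : ℕ) (A : Finset ℕ) : Finset ℕ :=
  (Finset.Icc 1 N).filter fun j => ∃ i ∈ A, j = i ∨ i + 1 = j ∨ j + 1 = i ∨
    (i = N ∧ j = 1) ∨ (i = 1 ∧ j = N)

/-- One-step neighborhood on the path `P_N` (vertices `1..N`, loop at every vertex). -/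
def pathStep (N : ℕ) (A : Finset ℕ) : Finset ℕ :=
  (Finset.Icc 1 N).filter fun j => ∃ i ∈ A, j = i ∨ i + 1 = j ∨ j + 1 = i

/-- `k`-neighborhood on the cycle `C_N`. -/
def GammaC (N k : ℕ) (A : Finset ℕ) : Finset ℕ := (cycStep N)^[k] A

/-- `k`-neighborhood on the path `P_N`. -/
def GammaP (N k : ℕ) (A : Finset ℕ) : Finset ℕ := (pathStep N)^[k] A

/-- Candidate sets `𝒟_i` for an adaptive strategy `σ` (mapping the list of previous
answers to the next test set), an answer sequence `y`, expansion `Γ`, and initial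
candidate set `D0`. -/
def Dadapt (Γ : Finset ℕ → Finset ℕ) (σ : List Bool → Finset ℕ) (D0 : Finset ℕ)
    (y : ℕ → Bool) : ℕ → Finset ℕ
  | 0 => D0
  | i + 1 =>
      let D := Dadapt Γ σ D0 y i
      let T := σ ((List.range i).map y)
      if y i then Γ (T ∩ D) else Γ (D \ T)

/-- There is an adaptive strategy with `n` tests that is successful with accuracy `s`:
for every consistent answer sequence some candidate set has size at most `s`. -/
def Successful (Γ : Finset ℕ → Finset ℕ) (D0 : Finset ℕ) (n s : ℕ) : Prop :=
  ∃ σ : List Bool → Finset ℕ, ∀ y : ℕ → Bool,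
    (∀ i ≤ n, (Dadapt Γ σ D0 y i).Nonempty) →
    ∃ i ≤ n, (Dadapt Γ σ D0 y i).card ≤ s

/-- `(C_N, s)`-successful adaptive strategy with `n` tests exists. -/
def cycSuccessful (N k n s : ℕ) : Prop :=
  Successful (GammaC N k) (Finset.Icc 1 N) n s

/-- `(P_N, s)`-successful adaptive strategy with `n` tests exists. -/
def pathSuccessful (N k n s : ℕ) : Prop :=
  Successful (GammaP N k) (Finset.Icc 1 N) n s

/-- `s^*(C_N)`: minimum accuracy achievable on the cycle. -/
noncomputable def sStarC (N k : ℕ) : ℕ := sInf {s | ∃ n, cycSuccessful N k n s}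

/-- `s^*(P_N)`: minimum accuracy achievable on the path. -/
noncomputable def sStarP (N k : ℕ) : ℕ := sInf {s | ∃ n, pathSuccessful N k n s}

/-- Unexpanded candidate set after test `i` (before the `k`-neighborhood expansion
is applied): `𝒯_i ∩ 𝒟_{i-1}` or `𝒟_{i-1} \ 𝒯_i` according to the answer `y_{i-1}`;
by convention it is `D0` when no test has been performed. -/
def Uadapt (Γ : Finset ℕ → Finset ℕ) (σ : List Bool → Finset ℕ) (D0 : Finset ℕ)
    (y : ℕ → Bool) : ℕ → Finset ℕ
  | 0 => D0
  | i + 1 =>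
      let D := Dadapt Γ σ D0 y i
      let T := σ ((List.range i).map y)
      if y i then T ∩ D else D \ T

/-- Restricted model (the target does not move after the last test): there is an
adaptive strategy with `n` tests such that for every consistent answer sequence,
either some intermediate (expanded) candidate set `𝒟_i` with `i < n` has size at
most `s`, or the final unexpanded candidate set after test `n` has size at most
`s`. -/
def RSuccessful (Γ : Finset ℕ → Finset ℕ) (D0 : Finset ℕ) (n s : ℕ) : Prop :=
  ∃ σ : List Bool → Finset ℕ, ∀ y : ℕ → Bool,
    (∀ i ≤ n, (Dadapt Γ σ D0 y i).Nonempty) →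
    ((∃ i < n, (Dadapt Γ σ D0 y i).card ≤ s) ∨ (Uadapt Γ σ D0 y n).card ≤ s)

/-! ### One test at a time -/

/-- After the first test, the candidate sets are those of the residual strategy. -/
lemma Dadapt_shift (Γ : Finset ℕ → Finset ℕ) (σ : List Bool → Finset ℕ) (D : Finset ℕ)
    (y : ℕ → Bool) (i : ℕ) :
    Dadapt Γ σ D y (i + 1) = Dadapt Γ (fun l => σ (y 0 :: l))
      (if y 0 then Γ (σ [] ∩ D) else Γ (D \ σ [])) (fun j => y (j + 1)) i := by
  induction i with
  | zero => simp [Dadapt]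
  | succ i ih =>
    rw [Dadapt, ih]
    simp only [Dadapt, List.range_succ_eq_map, List.map_cons, List.map_map]
    rfl

lemma Uadapt_shift (Γ : Finset ℕ → Finset ℕ) (σ : List Bool → Finset ℕ) (D : Finset ℕ)
    (y : ℕ → Bool) (i : ℕ) :
    Uadapt Γ σ D y (i + 2) = Uadapt Γ (fun l => σ (y 0 :: l))
      (if y 0 then Γ (σ [] ∩ D) else Γ (D \ σ [])) (fun j => y (j + 1)) (i + 1) := by
  rw [Uadapt, Dadapt_shift]
  simp only [Uadapt, List.range_succ_eq_map, List.map_cons, List.map_map]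
  rfl

lemma rSuccessful_empty (Γ : Finset ℕ → Finset ℕ) (n s : ℕ) : RSuccessful Γ ∅ n s :=
  ⟨fun _ => ∅, fun _ h => absurd (h 0 (Nat.zero_le _)) (by simp [Dadapt])⟩

lemma rSuccessful_one (Γ : Finset ℕ → Finset ℕ) (D T : Finset ℕ) (s : ℕ)
    (h1 : (T ∩ D).card ≤ s) (h2 : (D \ T).card ≤ s) : RSuccessful Γ D 1 s := by
  refine ⟨fun _ => T, fun y _ => Or.inr ?_⟩
  simp only [Uadapt, Dadapt]
  split_ifs <;> assumption

lemma rSuccessful_step (Γ : Finset ℕ → Finset ℕ) (D T : Finset ℕ) (n s : ℕ)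
    (h1 : RSuccessful Γ (Γ (T ∩ D)) (n + 1) s) (h2 : RSuccessful Γ (Γ (D \ T)) (n + 1) s) :
    RSuccessful Γ D (n + 2) s := by
  obtain ⟨σ₁, h1⟩ := h1
  obtain ⟨σ₂, h2⟩ := h2
  let σ : List Bool → Finset ℕ := fun l => match l with
    | [] => T
    | b :: l => if b then σ₁ l else σ₂ l
  refine ⟨σ, fun y hy => ?_⟩
  have key : (∃ i < n + 1, (Dadapt Γ σ D y (i + 1)).card ≤ s) ∨
      (Uadapt Γ σ D y (n + 2)).card ≤ s := by
    have hy' : ∀ i ≤ n + 1, (Dadapt Γ σ D y (i + 1)).Nonempty :=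
      fun i hi => hy (i + 1) (by omega)
    rw [Uadapt_shift]
    simp only [Dadapt_shift] at hy' ⊢
    cases hb : y 0
    · simp only [hb, Bool.false_eq_true, if_false, σ] at hy' ⊢
      exact h2 _ hy'
    · simp only [hb, if_true, σ] at hy' ⊢
      exact h1 _ hy'
  rcases key with ⟨i, hi, h⟩ | h
  · exact Or.inl ⟨i + 1, by omega, h⟩
  · exact Or.inr h

/-- A successful first test leaves successful positions on either answer; the alternative
`D.card ≤ s` also covers the empty set, from which every strategy is vacuously successful. -/
lemma RSuccessful.exists_step {Γ : Finset ℕ → Finset ℕ} {D : Finset ℕ} {n s : ℕ}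
    (h : RSuccessful Γ D (n + 2) s) :
    D.card ≤ s ∨ ∃ T, RSuccessful Γ (Γ (T ∩ D)) (n + 1) s ∧
      RSuccessful Γ (Γ (D \ T)) (n + 1) s := by
  by_cases hD : D.card ≤ s
  · exact Or.inl hD
  obtain ⟨σ, h⟩ := h
  have hne : D.Nonempty := by
    rw [← Finset.card_pos]; omega
  have key : ∀ b : Bool, RSuccessful Γ (if b then Γ (σ [] ∩ D) else Γ (D \ σ [])) (n + 1) s := by
    intro b
    refine ⟨fun l => σ (b :: l), fun y hy => ?_⟩
    let z : ℕ → Bool := fun j => match j with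
      | 0 => b
      | j + 1 => y j
    have hz := h z (by
      intro i hi
      cases i with
      | zero => exact hne
      | succ i => rw [Dadapt_shift]; exact hy i (by omega))
    rw [Uadapt_shift] at hz
    rcases hz with ⟨i, hi, hc⟩ | hc
    · cases i with
      | zero => exact absurd hc hD
      | succ i => rw [Dadapt_shift] at hc; exact Or.inl ⟨i, by omega, hc⟩
    · exact Or.inr hc
  exact Or.inr ⟨σ [], key true, key false⟩

/-- The last test is judged before the neighborhood is taken, but an answer counts only if the
neighborhood is nonempty. -/
lemma RSuccessful.exists_last {Γ : Finset ℕ → Finset ℕ} {D : Finset ℕ} {s : ℕ}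
    (h : RSuccessful Γ D 1 s) :
    D.card ≤ s ∨ ∃ T, ((Γ (T ∩ D)).Nonempty → (T ∩ D).card ≤ s) ∧
      ((Γ (D \ T)).Nonempty → (D \ T).card ≤ s) := by
  by_cases hD : D.card ≤ s
  · exact Or.inl hD
  obtain ⟨σ, h⟩ := h
  have hne : D.Nonempty := by
    rw [← Finset.card_pos]; omega
  have key : ∀ b : Bool, (Dadapt Γ σ D (fun _ => b) 1).Nonempty →
      (Uadapt Γ σ D (fun _ => b) 1).card ≤ s := by
    intro b hb
    rcases h (fun _ => b) (by
      intro i hi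
      interval_cases i
      · exact hne
      · exact hb) with ⟨i, hi, hc⟩ | hc
    · interval_cases i
      exact absurd hc hD
    · exact hc
  exact Or.inr ⟨σ [], key true, key false⟩

/-! ### Neighborhoods on the path -/

lemma GammaP_succ (N k : ℕ) (A : Finset ℕ) :
    GammaP N (k + 1) A = GammaP N k (pathStep N A) := rfl

lemma GammaP_empty (N k : ℕ) : GammaP N k ∅ = ∅ := by
  induction k with
  | zero => rfl
  | succ k ih => rw [GammaP_succ]; simpa [pathStep] using ih

lemma pathStep_Ioc (N p q : ℕ) (hpq : p < q) :
    pathStep N (Ioc p q) = Ioc (p - 1) (min (q + 1) N) := by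
  ext j
  simp only [pathStep, mem_filter, mem_Icc, mem_Ioc]
  constructor
  · rintro ⟨hj, i, hi, h⟩
    omega
  · intro hj
    refine ⟨by omega, ?_⟩
    by_cases h1 : j ≤ p
    · exact ⟨p + 1, by omega, by omega⟩
    · by_cases h2 : q < j
      · exact ⟨q, by omega, by omega⟩
      · exact ⟨j, by omega, by omega⟩

lemma GammaP_Ioc (N k p q : ℕ) (hpq : p < q) (hq : q ≤ N) :
    GammaP N k (Ioc p q) = Ioc (p - k) (min (q + k) N) := by
  induction k generalizing p q with
  | zero => simp [GammaP, hq]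
  | succ k ih =>
    rw [GammaP_succ, pathStep_Ioc N p q hpq, ih _ _ (by omega) (by omega)]
    congr 1 <;> omega

/-- Inside the window, one step adds a new point on the left and one on the right. -/
lemma card_pathStep_window (N m : ℕ) (B : Finset ℕ)
    (hB : (B ∩ Ioc (m + 1) (N - (m + 1))).Nonempty) :
    (B ∩ Ioc (m + 1) (N - (m + 1))).card + 2 ≤ (pathStep N B ∩ Ioc m (N - m)).card := by
  set A := B ∩ Ioc (m + 1) (N - (m + 1)) with hA
  have mem : ∀ x ∈ A, x ∈ B ∧ m + 1 < x ∧ x ≤ N - (m + 1) := by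
    intro x hx
    simpa [hA, mem_inter, mem_Ioc] using hx
  obtain ⟨ha, ha1, ha2⟩ := mem _ (A.min'_mem hB)
  obtain ⟨hb, hb1, hb2⟩ := mem _ (A.max'_mem hB)
  have hmin : ∀ x ∈ A, A.min' hB ≤ x := fun x hx => A.min'_le x hx
  have hmax : ∀ x ∈ A, x ≤ A.max' hB := fun x hx => A.le_max' x hx
  have hab := hmin _ (A.max'_mem hB)
  generalize A.min' hB = a at *
  generalize A.max' hB = b at *
  have hsub : insert (a - 1) (insert (b + 1) A) ⊆ pathStep N B ∩ Ioc m (N - m) := by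
    intro x hx
    simp only [mem_insert] at hx
    simp only [pathStep, mem_inter, mem_filter, mem_Icc, mem_Ioc]
    rcases hx with rfl | rfl | hx
    · exact ⟨⟨by omega, a, ha, by omega⟩, by omega⟩
    · exact ⟨⟨by omega, b, hb, by omega⟩, by omega⟩
    · obtain ⟨h1, h2, h3⟩ := mem x hx
      exact ⟨⟨by omega, x, h1, by omega⟩, by omega⟩
  have hbA : b + 1 ∉ A := fun h => by have := hmax _ h; omega
  have haA : a - 1 ∉ insert (b + 1) A := by
    rw [mem_insert]
    rintro (h | h)
    · omega
    · have := hmin _ h; omega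
  calc A.card + 2 = (insert (a - 1) (insert (b + 1) A)).card := by
        rw [card_insert_of_notMem haA, card_insert_of_notMem hbA]
    _ ≤ _ := card_le_card hsub

/-- A set meeting the window gains at least `2k` points when both the set and the window
expand by `k`: the ends of the path play no role. -/
lemma card_gammaP_window (N k m : ℕ) (B : Finset ℕ)
    (hB : (B ∩ Ioc (m + k) (N - (m + k))).Nonempty) :
    (B ∩ Ioc (m + k) (N - (m + k))).card + 2 * k ≤ (GammaP N k B ∩ Ioc m (N - m)).card := by
  induction k generalizing B with
  | zero => simp [GammaP]
  | succ k ih =>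
    have h1 := card_pathStep_window N (m + k) B hB
    have h2 := ih (pathStep N B) (by rw [← Finset.card_pos]; omega)
    rw [GammaP_succ]
    have h3 : m + (k + 1) = m + k + 1 := rfl
    rw [h3]
    omega

/-! ### Upper bound -/

/-- Half the number of points of the window that `n + 1` tests can handle. -/
def halfCap (k s n : ℕ) : ℕ := (s - 2 * k) * 2 ^ n + 2 * k

lemma halfCap_zero {k s : ℕ} (hs : 4 * k ≤ s) : halfCap k s 0 = s := by
  simp only [halfCap, pow_zero]; omega

lemma halfCap_succ (k s n : ℕ) : halfCap k s (n + 1) + 2 * k = 2 * halfCap k s n := by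
  simp only [halfCap, pow_succ]; ring

lemma le_halfCap (k s n : ℕ) : s ≤ halfCap k s n := by
  have : (s - 2 * k) * 1 ≤ (s - 2 * k) * 2 ^ n := Nat.mul_le_mul_left _ Nat.one_le_two_pow
  simp only [halfCap]; omega

/-- A test cuts the part of the candidate set inside `W` into two. -/
lemma card_window_split (D T W : Finset ℕ) :
    (D ∩ W).card = ((T ∩ D) ∩ W).card + ((D \ T) ∩ W).card := by
  rw [← card_union_of_disjoint]
  · congr 1
    ext x
    simp only [mem_inter, mem_union, mem_sdiff]
    tauto
  · rw [Finset.disjoint_left]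
    intro x
    simp only [mem_inter, mem_sdiff]
    tauto

lemma card_window_le {N k s : ℕ} (n : ℕ) (D : Finset ℕ)
    (h : RSuccessful (GammaP N k) D (n + 1) s) :
    (D ∩ Ioc (k * n) (N - k * n)).card ≤ 2 * halfCap k s n := by
  have hle := le_halfCap k s n
  have hsmall : D.card ≤ s → (D ∩ Ioc (k * n) (N - k * n)).card ≤ 2 * halfCap k s n := by
    intro hD
    have := card_le_card (inter_subset_left : D ∩ Ioc (k * n) (N - k * n) ⊆ D)
    omega
  induction n generalizing D with
  | zero =>
    rcases h.exists_last with hD | ⟨T, h1, h2⟩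
    · exact hsmall hD
    -- An answer compatible with some vertex of the path keeps the candidate set nonempty.
    have half : ∀ B : Finset ℕ, ((GammaP N k B).Nonempty → B.card ≤ s) →
        (B ∩ Ioc 0 N).card ≤ s := by
      intro B hB
      have hsub := card_le_card (inter_subset_left : B ∩ Ioc 0 N ⊆ B)
      rcases (B ∩ Ioc 0 N).eq_empty_or_nonempty with he | ⟨x, hx⟩
      · simp [he]
      · refine hsub.trans (hB ?_)
        have hstep : ∀ j, x ∈ GammaP N j B := by
          intro j
          induction j with
          | zero => exact (mem_inter.1 hx).1
          | succ j ih =>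
            rw [GammaP, Function.iterate_succ_apply']
            have hx' := mem_Ioc.1 (mem_inter.1 hx).2
            exact mem_filter.2 ⟨mem_Icc.2 (by omega), x, ih, Or.inl rfl⟩
        exact ⟨x, hstep k⟩
    have e1 := half _ h1
    have e2 := half _ h2
    have e3 := card_window_split D T (Ioc 0 N)
    simp only [Nat.mul_zero, Nat.sub_zero] at *
    omega
  | succ n ih =>
    rcases h.exists_step with hD | ⟨T, h1, h2⟩
    · exact hsmall hD
    have hcap := halfCap_succ k s n
    have half : ∀ B : Finset ℕ, RSuccessful (GammaP N k) (GammaP N k B) (n + 1) s →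
        (B ∩ Ioc (k * n + k) (N - (k * n + k))).card ≤ halfCap k s (n + 1) := by
      intro B hB
      rcases (B ∩ Ioc (k * n + k) (N - (k * n + k))).eq_empty_or_nonempty with he | hne
      · simp [he]
      · have e1 := card_gammaP_window N k (k * n) B hne
        have hle' := le_halfCap k s n
        have e2 := ih (GammaP N k B) hB hle' (fun hc => by
          have := card_le_card
            (inter_subset_left : GammaP N k B ∩ Ioc (k * n) (N - k * n) ⊆ GammaP N k B)
          omega)
        omega
    have e1 := half _ h1
    have e2 := half _ h2
    have e3 := card_window_split D T (Ioc (k * n + k) (N - (k * n + k)))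
    rw [Nat.mul_succ]
    omega

/-! ### The strategy -/

/-- An interval `Ioc p q` having at most `2 (h n)` points in the window `Ioc m (N - m)`, `m = k n`,
is handled by `n + 1` tests. The last hypothesis expresses this bound without
subtraction, `max p m` being the left end of the part of the interval inside the window. -/
lemma rSuccessful_Ioc {N k s : ℕ} (hs : 4 * k ≤ s) (n p q : ℕ) (hq : q ≤ N)
    (h : q ≤ max p (k * n) + 2 * halfCap k s n ∨
      N ≤ k * n + max p (k * n) + 2 * halfCap k s n) :
    RSuccessful (GammaP N k) (Ioc p q) (n + 1) s := by
  have inter_eq : ∀ c, Ioc 0 c ∩ Ioc p q = Ioc p (min c q) := by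
    intro c; ext x; simp only [mem_inter, mem_Ioc]; omega
  have sdiff_eq : ∀ c, p ≤ c → Ioc p q \ Ioc 0 c = Ioc c q := by
    intro c hc; ext x; simp only [mem_sdiff, mem_Ioc]; omega
  induction n generalizing p q with
  | zero =>
    rw [halfCap_zero hs] at h
    apply rSuccessful_one _ _ (Ioc 0 (p + s))
    · rw [inter_eq, Nat.card_Ioc]; omega
    · rw [sdiff_eq _ (by omega), Nat.card_Ioc]; omega
  | succ n ih =>
    have hcap := halfCap_succ k s n
    rw [Nat.mul_succ] at h
    -- An empty interval corresponds to an impossible answer; a nonempty one grows by `k` at each end.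
    have grow : ∀ p' q', q' ≤ N →
        (min (q' + k) N ≤ max (p' - k) (k * n) + 2 * halfCap k s n ∨
          N ≤ k * n + max (p' - k) (k * n) + 2 * halfCap k s n) →
        RSuccessful (GammaP N k) (GammaP N k (Ioc p' q')) (n + 1) s := by
      intro p' q' hq' h'
      by_cases hlt : p' < q'
      · rw [GammaP_Ioc N k p' q' hlt hq']
        refine ih _ _ (by omega) h' ?_ ?_
        · intro c; ext x; simp only [mem_inter, mem_Ioc]; omega
        · intro c hc; ext x; simp only [mem_sdiff, mem_Ioc]; omega
      · rw [Ioc_eq_empty hlt, GammaP_empty]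
        exact rSuccessful_empty _ _ _
    -- Cut after the first `halfCap k s (n + 1)` points of the window.
    apply rSuccessful_step _ _ (Ioc 0 (max p (k * n + k) + halfCap k s (n + 1)))
    · rw [inter_eq]
      apply grow _ _ (by omega)
      omega
    · rw [sdiff_eq _ (by omega)]
      apply grow _ _ hq
      omega

/-- Restricted model on the path: for `k ≥ 1`, `s ≥ 4k` and `n ≥ 0`, the maximum
`N` admitting a successful adaptive strategy with `n` tests on `P_N` (with no
movement after the last test) is `N^*_p(n,s) = (s-2k)·2^n + k(2n+2)`. -/
theorem path_restricted_max_N (k n s : ℕ) (hk : 1 ≤ k) (hs : 4 * k ≤ s) :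
    RSuccessful (GammaP ((s - 2 * k) * 2 ^ n + k * (2 * n + 2)) k)
      (Finset.Icc 1 ((s - 2 * k) * 2 ^ n + k * (2 * n + 2))) n s ∧
    ∀ N, RSuccessful (GammaP N k) (Finset.Icc 1 N) n s →
      N ≤ (s - 2 * k) * 2 ^ n + k * (2 * n + 2) := by
  cases n with
  | zero =>
    have e : (s - 2 * k) * 2 ^ 0 + k * (2 * 0 + 2) = s := by
      simp only [pow_zero]; omega
    rw [e]
    refine ⟨⟨fun _ => ∅, fun y _ => Or.inr (by simp [Uadapt])⟩, ?_⟩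
    rintro N ⟨σ, h⟩
    by_contra! hN
    rcases h (fun _ => true) (by
      intro i hi
      obtain rfl : i = 0 := by omega
      exact ⟨1, by simp [Dadapt]; omega⟩) with ⟨i, hi, _⟩ | hc
    · omega
    · simp [Uadapt] at hc
      omega
  | succ n =>
    have e : (s - 2 * k) * 2 ^ (n + 1) + k * (2 * (n + 1) + 2)
        = 2 * halfCap k s n + 2 * (k * n) := by
      simp only [halfCap, pow_succ]; ring
    have hI : ∀ N, Icc 1 N = Ioc 0 N := by
      intro N; ext x; simp only [mem_Icc, mem_Ioc]; omega
    rw [e]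
    refine ⟨?_, fun N h => ?_⟩
    · rw [hI]
      exact rSuccessful_Ioc hs n 0 _ le_rfl (Or.inr (by omega))
    · rw [hI] at h
      have h1 := card_window_le n _ h
      have h2 : Ioc 0 N ∩ Ioc (k * n) (N - k * n) = Ioc (k * n) (N - k * n) := by
        ext x; simp only [mem_inter, mem_Ioc]; omega
      rw [h2, Nat.card_Ioc] at h1
      omega
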